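/- Let G be a word hyperbolic group generated by a finite set 𝒢 closed under inversion, and let C₁ and C₂ be virtually cyclic subgroups of G whose intersection C₁ ∩ C₂ is finite. Then there is a constant λ₂ > 0 such that for any c₁ ∈ C₁ and c₂ ∈ C₂, the word V₁V₂ is λ₂-quasigeodesic in the word metric d_𝒢, where Vᵢ is any d_𝒢-geodesic word representing cᵢ for i = 1, 2. -/

import Mathlib

universe u v w

section Defs

variable {G : Type u} [Group G]

/-- A finite generating set closed under inversion. -/
def IsSymmGen (X : Set G) : Prop :=
  X.Finite ∧ (∀ x ∈ X, x⁻¹ ∈ X) ∧ Subgroup.closure X = ⊤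

/-- Word length of `g` with respect to `X`. -/
noncomputable def wordLength (X : Set G) (g : G) : ℕ :=
  sInf {n : ℕ | ∃ l : List G, l.length = n ∧ (∀ x ∈ l, x ∈ X) ∧ l.prod = g}

/-- Word metric. -/
noncomputable def wordDist (X : Set G) (g h : G) : ℕ :=
  wordLength X (g⁻¹ * h)

/-- Gromov product with respect to the word metric. -/
noncomputable def gromovProd (X : Set G) (x y w : G) : ℝ :=
  ((wordDist X x w : ℝ) + (wordDist X y w : ℝ) - (wordDist X x y : ℝ)) / 2

end Defs

/-- A group is word hyperbolic if for some finite symmetric generating set the Gromov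
product satisfies the hyperbolicity inequality. -/
def IsWordHyperbolic (G : Type u) [Group G] : Prop :=
  ∃ X : Set G, IsSymmGen X ∧ ∃ δ : ℝ, 0 ≤ δ ∧
    ∀ x y z w : G,
      gromovProd X x z w ≥ min (gromovProd X x y w) (gromovProd X y z w) - δ

/-- A subgroup is quasiconvex: it is finitely generated and word lengths distort linearly. -/
def IsQuasiconvex {G : Type u} [Group G] (A : Subgroup G) : Prop :=
  ∃ Y : Set ↥A, IsSymmGen Y ∧ ∃ X : Set G, IsSymmGen X ∧ ∃ c : ℝ, 0 < c ∧
    ∀ a : ↥A, (wordLength Y a : ℝ) ≤ c * (wordLength X (a : G) : ℝ) + c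

/-- Property (Q): every finitely generated subgroup is quasiconvex. -/
def HasPropertyQ (G : Type u) [Group G] : Prop :=
  ∀ H : Subgroup G, H.FG → IsQuasiconvex H

/-- A group is virtually cyclic if it has a cyclic subgroup of finite index. -/
def IsVirtuallyCyclic (C : Type u) [Group C] : Prop :=
  ∃ Z : Subgroup C, IsCyclic ↥Z ∧ Z.FiniteIndex

/-- `G` is the amalgamated free product of its subgroups `A` and `B` along `C`:
`C = A ⊓ B`, `A ⊔ B = ⊤` and `G` has the pushout universal property. -/
structure IsAmalgamatedFreeProduct {G : Type u} [Group G] (A B C : Subgroup G) : Prop where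
  le_left : C ≤ A
  le_right : C ≤ B
  inf_eq : A ⊓ B = C
  sup_eq_top : A ⊔ B = ⊤
  univ : ∀ (K : Type u) [Group K] (f : ↥A →* K) (g : ↥B →* K),
    (∀ (c : G) (hA : c ∈ A) (hB : c ∈ B), f ⟨c, hA⟩ = g ⟨c, hB⟩) →
    ∃ h : G →* K, (∀ a : ↥A, h a = f a) ∧ (∀ b : ↥B, h b = g b)

section Words

variable {G : Type u} [Group G]

/-- A word over the alphabet `X`. -/
def IsWordOver (X : Set G) (l : List G) : Prop := ∀ x ∈ l, x ∈ X

/-- A geodesic word over `X`. -/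
def IsGeodesicWord (X : Set G) (l : List G) : Prop :=
  IsWordOver X l ∧ l.length = wordLength X l.prod

/-- A `lam`-quasigeodesic word over `X`: every subword `v` satisfies
`l(v) ≤ lam * l_X(v̄) + lam`. -/
def IsQuasigeodesicWord (X : Set G) (lam : ℝ) (l : List G) : Prop :=
  IsWordOver X l ∧
    ∀ v : List G, v <:+: l → (v.length : ℝ) ≤ lam * (wordLength X v.prod : ℝ) + lam

/-- `g` is a shortest element of the subset `S` with respect to `wordLength X`. -/
def ShortestIn (X : Set G) (g : G) (S : Set G) : Prop :=
  g ∈ S ∧ ∀ s ∈ S, wordLength X g ≤ wordLength X s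

end Words

/-- `G` together with `ια, ιβ` is the pushout of `ℤ → A, 1 ↦ x` and `ℤ → B, 1 ↦ y`. -/
structure IsAmalgamOverZ {A : Type u} {B : Type v} {G : Type w}
    [Group A] [Group B] [Group G]
    (ια : A →* G) (ιβ : B →* G) (x : A) (y : B) : Prop where
  comm : ια x = ιβ y
  gen : ια.range ⊔ ιβ.range = ⊤
  univ : ∀ (K : Type (max u v w)) [Group K] (f : A →* K) (g : B →* K),
    f x = g y → ∃ h : G →* K, h.comp ια = f ∧ h.comp ιβ = g

/-!
By the Morse lemma, a geodesic from `1` to an element of a quasiconvex subgroup stays near that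
subgroup. If geodesics to `a ∈ C₁` and `b ∈ C₂` fellow travel up to distance `t`, then near distance
`t` there are elements of `C₁` and `C₂` at bounded distance from each other. As `C₁ ⊓ C₂` is finite,
only finitely many elements of `C₁` are that close to `C₂`, so `t`, and with it the Gromov product
`(a·b)_1`, is bounded. Hence, seen from the point where `V₁` and `V₂` meet, the paths `V₁⁻¹` and
`V₂` diverge at once, and a subword straddling that point is nearly as long as it can be.

Virtually cyclic subgroups are quasiconvex because the length of `g ^ n` grows linearly when `g` has
infinite order: a sublinear stretch of powers would, by translation, crowd too many points into a
bounded part of a neighbourhood of a long geodesic.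
-/

section GromovProduct

variable {M : Type*} [PseudoMetricSpace M]

/-- The Gromov product `(x·y)_o` of a pseudometric space. For a word metric this is `gromovProd`. -/
noncomputable def gromovProduct (x y o : M) : ℝ :=
  (dist x o + dist y o - dist x y) / 2

theorem gromovProduct_comm (x y o : M) : gromovProduct x y o = gromovProduct y x o := by
  rw [gromovProduct, gromovProduct, dist_comm x y, add_comm]

theorem gromovProduct_self (x o : M) : gromovProduct x x o = dist x o := by
  simp [gromovProduct]

theorem gromovProduct_nonneg (x y o : M) : 0 ≤ gromovProduct x y o := by
  have := dist_triangle_right x y o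
  unfold gromovProduct
  linarith

theorem gromovProduct_le_dist_left (x y o : M) : gromovProduct x y o ≤ dist x o := by
  have := dist_triangle_left y o x
  unfold gromovProduct
  linarith

theorem gromovProduct_le_dist_right (x y o : M) : gromovProduct x y o ≤ dist y o :=
  gromovProduct_comm x y o ▸ gromovProduct_le_dist_left y x o

theorem gromovProduct_eq_zero_iff {x y o : M} :
    gromovProduct x y o = 0 ↔ dist x o + dist o y = dist x y := by
  rw [gromovProduct, div_eq_zero_iff, or_iff_left two_ne_zero, sub_eq_zero, dist_comm y o]

theorem gromovProduct_add_gromovProduct (x y o : M) :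
    gromovProduct x y o + gromovProduct o y x = dist x o := by
  rw [gromovProduct, gromovProduct, dist_comm o x, dist_comm y x, dist_comm y o]
  ring

end GromovProduct

section Hyperbolic

/-- Gromov's `δ`-hyperbolicity, required at every base point. -/
def IsGromovHyperbolic (M : Type*) [PseudoMetricSpace M] (δ : ℝ) : Prop :=
  ∀ x y z o : M, min (gromovProduct x y o) (gromovProduct y z o) ≤ gromovProduct x z o + δ

variable {M : Type*} [PseudoMetricSpace M] {δ : ℝ}

namespace IsGromovHyperbolic

theorem nonneg [Nonempty M] (hM : IsGromovHyperbolic M δ) : 0 ≤ δ := by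
  inhabit M
  simpa [gromovProduct] using hM default default default default

theorem min_min_le (hM : IsGromovHyperbolic M δ) (x y z w o : M) :
    min (gromovProduct x y o) (min (gromovProduct y z o) (gromovProduct z w o)) ≤
      gromovProduct x w o + 2 * δ := by
  calc _ ≤ min (gromovProduct x y o) (gromovProduct y w o + δ) := by gcongr; exact hM y z w o
    _ ≤ min (gromovProduct x y o + δ) (gromovProduct y w o + δ) := by
      have := (⟨o⟩ : Nonempty M)
      gcongr
      linarith [hM.nonneg]
    _ ≤ gromovProduct x w o + 2 * δ := by
      rw [min_add_add_right]
      linarith [hM x y w o]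

/-- If `s` lies near a geodesic from `o` to `a` and `p` near one from `o` to `b`, then `s` and `p`
cannot fellow travel much longer than `a` and `b` do. -/
theorem gromovProduct_le_of_le (hM : IsGromovHyperbolic M δ) {o a b s p : M} {K R : ℝ}
    (hs : gromovProduct o a s ≤ K) (hp : gromovProduct o b p ≤ K)
    (hab : gromovProduct a b o ≤ R) : gromovProduct s p o ≤ R + K + 2 * δ := by
  have hK : 0 ≤ K := (gromovProduct_nonneg o a s).trans hs
  have has : gromovProduct s p o - K ≤ gromovProduct a s o := by
    linarith [gromovProduct_add_gromovProduct s a o, gromovProduct_le_dist_left s p o,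
      gromovProduct_comm a s o]
  have hpb : gromovProduct s p o - K ≤ gromovProduct p b o := by
    linarith [gromovProduct_add_gromovProduct p b o, gromovProduct_le_dist_right s p o]
  have hmin := le_min has (le_min (sub_le_self _ hK) hpb)
  linarith [hM.min_min_le a s p b o]

theorem dist_le_of_gromovProduct_le (hM : IsGromovHyperbolic M δ) {x y p q : M} {K : ℝ}
    (hp : gromovProduct x y p ≤ K) (hq : gromovProduct x y q ≤ K) :
    dist p q ≤ |dist p x - dist q x| + 2 * K + 2 * δ := by
  have h := hM p y q x
  rw [gromovProduct_comm y q] at h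
  have hp' := gromovProduct_add_gromovProduct p y x
  have hq' := gromovProduct_add_gromovProduct q y x
  have hpq : dist p q = dist p x + dist q x - 2 * gromovProduct p q x := by
    rw [gromovProduct]
    ring
  rcases min_le_iff.1 h with h | h
  · linarith [le_abs_self (dist q x - dist p x), abs_sub_comm (dist p x) (dist q x)]
  · linarith [le_abs_self (dist p x - dist q x)]

/-- Exponential divergence: by repeated halving, a path whose ends have a small Gromov product but
which stays at distance `P` from `o` has length exponential in `P`. -/
theorem le_gromovProduct_of_path (hM : IsGromovHyperbolic M δ) {x : ℕ → M} {o : M} {P A : ℝ}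
    {k N : ℕ} (hA : 0 ≤ A) (hN : N ≤ 2 ^ k) (hfar : ∀ t ≤ N, P ≤ dist (x t) o)
    (hstep : ∀ t < N, dist (x t) (x (t + 1)) ≤ A) :
    P - A / 2 - k * δ ≤ gromovProduct (x 0) (x N) o := by
  induction k generalizing x N with
  | zero =>
    obtain rfl | rfl : N = 0 ∨ N = 1 := by simp at hN; lia
    · rw [gromovProduct_self]
      linarith [hfar 0 le_rfl]
    · have h₀ := hfar 0 zero_le_one
      have h₁ := hfar 1 le_rfl
      have h := hstep 0 zero_lt_one
      simp only [gromovProduct, Nat.cast_zero, zero_mul, sub_zero, zero_add] at h ⊢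
      linarith
  | succ k ih =>
    obtain ⟨m, n, rfl, hm, hn⟩ : ∃ m n, N = m + n ∧ m ≤ 2 ^ k ∧ n ≤ 2 ^ k :=
      ⟨min N (2 ^ k), N - min N (2 ^ k), by lia, by lia, by rw [pow_succ] at hN; lia⟩
    have hl : P - A / 2 - k * δ ≤ gromovProduct (x 0) (x m) o :=
      ih hm (fun t ht => hfar t (by lia)) fun t ht => hstep t (by lia)
    have hr : P - A / 2 - k * δ ≤ gromovProduct (x m) (x (m + n)) o :=
      ih (x := fun t => x (m + t)) hn (fun t ht => hfar (m + t) (by lia)) fun t ht =>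
        hstep (m + t) (by lia)
    push_cast
    linarith [le_min hl hr, hM (x 0) (x m) (x (m + n)) o]

end IsGromovHyperbolic
end Hyperbolic

theorem exists_clog_two_le_mul_add {ε : ℝ} (hε : 0 < ε) :
    ∃ C : ℝ, ∀ N : ℕ, (Nat.clog 2 N : ℝ) ≤ ε * N + C := by
  refine ⟨|Real.log (ε * Real.log 2) / Real.log 2| + 1, fun N => ?_⟩
  rcases N.eq_zero_or_pos with rfl | hN
  · simp only [Nat.clog_zero_right, Nat.cast_zero, mul_zero, zero_add]
    positivity
  have hN' : (0 : ℝ) < N := by exact_mod_cast hN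
  have hN₁ : (1 : ℝ) ≤ N := by exact_mod_cast hN
  have hlogN : Real.log N ≤ ε * Real.log 2 * N - Real.log (ε * Real.log 2) := by
    have := Real.log_le_sub_one_of_pos (x := ε * Real.log 2 * N) (by positivity)
    rw [Real.log_mul (by positivity) hN'.ne'] at this
    linarith
  calc (Nat.clog 2 N : ℝ) ≤ Real.logb 2 N + 1 := by
        have := (Nat.ceil_lt_add_one (Real.logb_nonneg one_lt_two hN₁)).le
        rwa [← Nat.cast_two, Real.natCeil_logb_natCast] at this
    _ ≤ (ε * Real.log 2 * N - Real.log (ε * Real.log 2)) / Real.log 2 + 1 := by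
        rw [Real.logb]
        gcongr
    _ = ε * N - Real.log (ε * Real.log 2) / Real.log 2 + 1 := by field_simp
    _ ≤ ε * N + (|Real.log (ε * Real.log 2) / Real.log 2| + 1) := by
        linarith [neg_le_abs (Real.log (ε * Real.log 2) / Real.log 2)]

section QuasigeodesicPath

variable {M : Type*} [PseudoMetricSpace M] {A : ℝ} {x : ℕ → M} {n : ℕ}

/-- The points `x 0, …, x n` form an `A`-quasi-geodesic, with `A` serving as multiplicative and as
additive constant. -/
def IsQuasigeodesicPath (A : ℝ) (x : ℕ → M) (n : ℕ) : Prop :=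
  ∀ i ≤ n, ∀ j ≤ n, dist (x i) (x j) ≤ A * |(i : ℝ) - j| + A ∧
    |(i : ℝ) - j| ≤ A * dist (x i) (x j) + A

namespace IsQuasigeodesicPath

theorem nonneg (hx : IsQuasigeodesicPath A x n) : 0 ≤ A := by
  simpa using (hx 0 n.zero_le 0 n.zero_le).1

theorem dist_succ_le (hx : IsQuasigeodesicPath A x n) {t : ℕ} (ht : t < n) :
    dist (x t) (x (t + 1)) ≤ 2 * A := by
  simpa [two_mul] using (hx t ht.le (t + 1) ht).1

theorem shift (hx : IsQuasigeodesicPath A x n) {k : ℕ} (hk : k ≤ n) :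
    IsQuasigeodesicPath A (fun i => x (k + i)) (n - k) := by
  intro i hi j hj
  simpa using hx (k + i) (by lia) (k + j) (by lia)

theorem reverse (hx : IsQuasigeodesicPath A x n) {k : ℕ} (hk : k ≤ n) :
    IsQuasigeodesicPath A (fun i => x (k - i)) k := by
  intro i hi j hj
  simpa [Nat.cast_sub hi, Nat.cast_sub hj, abs_sub_comm] using hx (k - i) (by lia) (k - j) (by lia)

end IsQuasigeodesicPath
end QuasigeodesicPath

section Morse

/-- Every two points have points exactly between them at every distance, up to an error `c`: the
part of being geodesic that word metrics retain. -/
def IsCoarselyMengerConvex (M : Type*) [PseudoMetricSpace M] (c : ℝ) : Prop :=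
  ∀ (x y : M) (t : ℝ), 0 ≤ t → t ≤ dist x y →
    ∃ z, dist x z + dist z y = dist x y ∧ dist x z ≤ t ∧ t ≤ dist x z + c

variable {M : Type*} [PseudoMetricSpace M] {c δ : ℝ}

/-- The loss in `le_gromovProduct_of_path` is logarithmic in the length of the path, hence absorbed
by any positive slope `ε`. -/
theorem IsGromovHyperbolic.exists_le_gromovProduct_of_isQuasigeodesicPath
    (hM : IsGromovHyperbolic M δ) (A : ℝ) {ε : ℝ} (hε : 0 < ε) :
    ∃ C : ℝ, ∀ (x : ℕ → M) (n : ℕ), IsQuasigeodesicPath A x n →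
      ∀ (w : M) (P : ℝ), (∀ t ≤ n, P ≤ dist (x t) w) → ∀ i ≤ n, ∀ j ≤ n,
        P - C - ε * dist (x i) (x j) ≤ gromovProduct (x i) (x j) w := by
  obtain ⟨C, hC⟩ := exists_clog_two_le_mul_add (ε := ε / (|δ * A| + 1)) (by positivity)
  refine ⟨A + ε + C * δ, fun x n hx w P hP i hi j hj => ?_⟩
  wlog hij : i ≤ j generalizing i j
  · rw [dist_comm, gromovProduct_comm]
    exact this j hj i hi (by lia)
  have := (⟨w⟩ : Nonempty M)
  have hA := hx.nonneg
  have hδ := hM.nonneg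
  have hN : ((j - i : ℕ) : ℝ) ≤ A * dist (x i) (x j) + A := by
    rw [Nat.cast_sub hij, ← abs_of_nonneg (sub_nonneg.2 (Nat.cast_le (α := ℝ).2 hij)), abs_sub_comm]
    exact (hx i hi j hj).2
  have hδA : ε / (|δ * A| + 1) * (δ * A) ≤ ε := by
    rw [div_mul_eq_mul_div, div_le_iff₀ (by positivity)]
    gcongr
    linarith [le_abs_self (δ * A)]
  have hk : (Nat.clog 2 (j - i) : ℝ) * δ ≤ ε * dist (x i) (x j) + ε + C * δ :=
    calc (Nat.clog 2 (j - i) : ℝ) * δ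
        ≤ (ε / (|δ * A| + 1) * (A * dist (x i) (x j) + A) + C) * δ := by
          gcongr
          exact (hC _).trans (by gcongr)
      _ = ε / (|δ * A| + 1) * (δ * A) * (dist (x i) (x j) + 1) + C * δ := by ring
      _ ≤ ε * (dist (x i) (x j) + 1) + C * δ := by gcongr
      _ = ε * dist (x i) (x j) + ε + C * δ := by ring
  have hpath := hM.le_gromovProduct_of_path (x := fun t => x (i + t)) (A := 2 * A) (by positivity)
    (Nat.le_pow_clog one_lt_two (j - i)) (fun t ht => hP (i + t) (by lia))
    fun t ht => hx.dist_succ_le (t := i + t) (by lia)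
  simp only [add_zero, Nat.add_sub_cancel' hij] at hpath
  linarith

/-- Every geodesic from `o` to `a` runs in the `K`-neighbourhood of `S`. Geodesics enter only by
the points on them, which are those with equality in the triangle inequality. -/
def FollowsGeodesics (K : ℝ) (o a : M) (S : Set M) : Prop :=
  ∀ w, dist o w + dist w a = dist o a → ∃ s ∈ S, dist w s ≤ K

theorem FollowsGeodesics.mono {K L : ℝ} {o a : M} {S : Set M} (h : FollowsGeodesics K o a S)
    (hKL : K ≤ L) : FollowsGeodesics L o a S := fun w hw =>
  (h w hw).imp fun _ hs => ⟨hs.1, hs.2.trans hKL⟩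

theorem IsCoarselyMengerConvex.nonneg [Nonempty M] (hc : IsCoarselyMengerConvex M c) : 0 ≤ c := by
  inhabit M
  obtain ⟨z, -, hz, hz'⟩ := hc default default 0 le_rfl dist_nonneg
  linarith

theorem IsCoarselyMengerConvex.exists_anchor (hc : IsCoarselyMengerConvex M c) {S : Set M} {D : ℝ}
    {e w : M} (he : e ∈ S) (hnear : FollowsGeodesics D e w S)
    (hfar : ∀ s ∈ S, D - 1 ≤ dist s w) :
    ∃ a, ∃ s ∈ S, dist e a + dist a w = dist e w ∧ dist a s ≤ D ∧ dist a w ≤ 2 * D + c ∧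
      D - 1 ≤ gromovProduct a s w := by
  have := (⟨w⟩ : Nonempty M)
  have hc₀ := hc.nonneg
  have hD : 0 ≤ D := by
    obtain ⟨s, -, hs⟩ := hnear e (by simp)
    exact dist_nonneg.trans hs
  rcases le_or_gt (dist e w) (2 * D) with h | h
  · exact ⟨e, e, he, by simp, by simpa, by linarith, (gromovProduct_self e w).symm ▸ hfar e he⟩
  · obtain ⟨a, ha, hea, hea'⟩ := hc e w (dist e w - 2 * D) (by linarith) (by linarith)
    obtain ⟨s, hs, has⟩ := hnear a ha
    refine ⟨a, s, hs, ha, has, by linarith, ?_⟩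
    have := hfar s hs
    unfold gromovProduct
    linarith

/-- If a point `w` of the geodesic is, up to `1`, as far as possible from the quasi-geodesic, then
points on the geodesic on both sides of `w` are joined by a detour along the quasi-geodesic that
avoids a large ball around `w` and yet is no longer than linear in its radius. -/
theorem IsGromovHyperbolic.exists_infDist_le_of_forall_infDist_le (hM : IsGromovHyperbolic M δ)
    (hc : IsCoarselyMengerConvex M c) (A : ℝ) :
    ∃ D : ℝ, ∀ (x : ℕ → M) (n : ℕ), IsQuasigeodesicPath A x n →
      ∀ w, dist (x 0) w + dist w (x n) = dist (x 0) (x n) →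
        (∀ a, dist (x 0) a + dist a (x n) = dist (x 0) (x n) →
          Metric.infDist a (x '' Set.Iic n) ≤ Metric.infDist w (x '' Set.Iic n) + 1) →
        Metric.infDist w (x '' Set.Iic n) ≤ D := by
  obtain ⟨C, hC⟩ :=
    hM.exists_le_gromovProduct_of_isQuasigeodesicPath A (ε := 1 / 12) (by norm_num)
  refine ⟨2 * (|C| + 1 + c / 6 + 2 * δ), fun x n hx w hw hmax => ?_⟩
  set S := x '' Set.Iic n
  set D := Metric.infDist w S + 1
  have hmem (i : ℕ) (hi : i ≤ n) : x i ∈ S := Set.mem_image_of_mem x hi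
  have hnear (a : M) (ha : dist (x 0) a + dist a (x n) = dist (x 0) (x n)) :
      ∃ s ∈ S, dist a s ≤ D := by
    obtain ⟨s, hs, has⟩ := ((Set.finite_Iic n).image x).isCompact.exists_infDist_eq_dist
      ⟨x 0, hmem 0 n.zero_le⟩ a
    exact ⟨s, hs, has ▸ hmax a ha⟩
  have hfar (s : M) (hs : s ∈ S) : D - 1 ≤ dist s w := by
    simpa [D, dist_comm s] using Metric.infDist_le_dist_of_mem hs
  obtain ⟨a, _, ⟨i, hi, rfl⟩, ha, hai, haw, hga⟩ := hc.exists_anchor (hmem 0 n.zero_le)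
    (fun a ha => hnear a <| by
      linarith [dist_triangle (x 0) a (x n), dist_triangle a w (x n)]) hfar
  obtain ⟨b, _, ⟨j, hj, rfl⟩, hb, hbj, hbw, hgb⟩ := hc.exists_anchor (hmem n le_rfl)
    (fun b hb => hnear b <| by
      linarith [dist_triangle (x 0) b (x n), dist_triangle (x 0) w b, dist_comm b (x n),
        dist_comm w (x n), dist_comm w b]) hfar
  have hab : gromovProduct a b w = 0 := gromovProduct_eq_zero_iff.2 <| by
    linarith [dist_triangle a w b, dist_triangle (x 0) a (x n), dist_triangle a b (x n),
      dist_comm w b, dist_comm w (x n), dist_comm b (x n)]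
  have hij : dist (x i) (x j) ≤ 6 * D + 2 * c := by
    linarith [dist_triangle4 (x i) a b (x j), dist_triangle_right a b w, dist_comm a (x i)]
  have hgij := hC x n hx w (D - 1) (fun t ht => hfar _ (hmem t ht)) i hi j hj
  rw [gromovProduct_comm] at hgb
  have := (⟨w⟩ : Nonempty M)
  have hmin : D / 2 - 1 - |C| - c / 6 ≤
      min (gromovProduct a (x i) w)
        (min (gromovProduct (x i) (x j) w) (gromovProduct (x j) b w)) := by
    have hD : 0 ≤ D := dist_nonneg.trans hai
    have := hc.nonneg
    refine le_min ?_ (le_min ?_ ?_) <;> linarith [le_abs_self C, abs_nonneg C]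
  linarith [hM.min_min_le a (x i) (x j) b w]

/-- First half of the Morse lemma. -/
theorem IsGromovHyperbolic.exists_followsGeodesics (hM : IsGromovHyperbolic M δ)
    (hc : IsCoarselyMengerConvex M c) (A : ℝ) :
    ∃ D : ℝ, ∀ (x : ℕ → M) (n : ℕ), IsQuasigeodesicPath A x n →
      FollowsGeodesics D (x 0) (x n) (x '' Set.Iic n) := by
  obtain ⟨D, hD⟩ := hM.exists_infDist_le_of_forall_infDist_le hc A
  refine ⟨D + 1, fun x n hx w hw => ?_⟩
  set S := x '' Set.Iic n
  have h₀ : x 0 ∈ S := Set.mem_image_of_mem x n.zero_le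
  set T := (Metric.infDist · S) '' {w | dist (x 0) w + dist w (x n) = dist (x 0) (x n)}
  have hT : BddAbove T := by
    refine ⟨dist (x 0) (x n), ?_⟩
    rintro _ ⟨a, ha : _ = _, rfl⟩
    calc Metric.infDist a S ≤ dist a (x 0) := Metric.infDist_le_dist_of_mem h₀
      _ ≤ dist (x 0) (x n) := by
        rw [dist_comm, ← ha]
        exact le_add_of_nonneg_right dist_nonneg
  have hwT : Metric.infDist w S ∈ T := Set.mem_image_of_mem _ hw
  obtain ⟨_, ⟨w', hw', rfl⟩, hlt⟩ := exists_lt_of_lt_csSup ⟨_, hwT⟩ (sub_one_lt (sSup T))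
  have hwD := hD x n hx w' hw' fun a ha => by
    linarith [le_csSup hT (Set.mem_image_of_mem (Metric.infDist · S) ha)]
  obtain ⟨s, hs, hws⟩ := ((Set.finite_Iic n).image x).isCompact.exists_infDist_eq_dist ⟨x 0, h₀⟩ w
  exact ⟨s, hs, by linarith [le_csSup hT hwT]⟩

theorem IsGromovHyperbolic.exists_dist_le_of_followsGeodesics (hM : IsGromovHyperbolic M δ)
    (hc : IsCoarselyMengerConvex M c) {K : ℝ} {o a b : M} {S T : Set M}
    (hS : FollowsGeodesics K o a S) (hT : FollowsGeodesics K o b T) :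
    ∃ s ∈ S, ∃ u ∈ T, dist s u ≤ 2 * (K + c + 2 * δ) ∧
      gromovProduct a b o ≤ dist s o + K + c := by
  have ht := gromovProduct_nonneg a b o
  obtain ⟨p, hp, hop, hop'⟩ :=
    hc o a _ ht (dist_comm o a ▸ gromovProduct_le_dist_left a b o)
  obtain ⟨q, hq, hoq, hoq'⟩ :=
    hc o b _ ht (dist_comm o b ▸ gromovProduct_le_dist_right a b o)
  obtain ⟨s, hs, hps⟩ := hS p hp
  obtain ⟨u, hu, hqu⟩ := hT q hq
  have hpa : gromovProduct p a o = dist o p := by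
    rw [gromovProduct, dist_comm p o, dist_comm a o]
    linarith
  have hbq : gromovProduct b q o = dist o q := by
    rw [gromovProduct, dist_comm q o, dist_comm b o, dist_comm b q]
    linarith
  have := (⟨o⟩ : Nonempty M)
  have hmin : gromovProduct a b o - c ≤
      min (gromovProduct p a o) (min (gromovProduct a b o) (gromovProduct b q o)) :=
    le_min (by linarith) (le_min (sub_le_self _ hc.nonneg) (by linarith))
  have hpq : dist p q = dist o p + dist o q - 2 * gromovProduct p q o := by
    rw [gromovProduct, dist_comm p o, dist_comm q o]
    ring
  refine ⟨s, hs, u, hu, ?_, ?_⟩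
  · linarith [hM.min_min_le p a b q o, dist_triangle4 s p q u, dist_comm p s]
  · linarith [dist_triangle o s p, dist_comm o s, dist_comm p s]

/-- Second half of the Morse lemma. -/
theorem IsGromovHyperbolic.exists_gromovProduct_le_of_isQuasigeodesicPath
    (hM : IsGromovHyperbolic M δ) (hc : IsCoarselyMengerConvex M c) (A : ℝ) :
    ∃ K : ℝ, ∀ (x : ℕ → M) (n : ℕ), IsQuasigeodesicPath A x n →
      ∀ k ≤ n, gromovProduct (x 0) (x n) (x k) ≤ K := by
  obtain ⟨D, hD⟩ := hM.exists_followsGeodesics hc A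
  refine ⟨A * (A * (2 * (D + c + 2 * δ)) + A) + A + D + c, fun x n hx k hk => ?_⟩
  have hleft := hD _ _ (hx.reverse hk)
  have hright := hD _ _ (hx.shift hk)
  simp only [Nat.sub_zero, Nat.sub_self, add_zero, Nat.add_sub_cancel' hk] at hleft hright
  obtain ⟨_, ⟨i, hi, rfl⟩, _, ⟨j, hj, rfl⟩, hij, hle⟩ :=
    hM.exists_dist_le_of_followsGeodesics hc hleft hright
  have hi : i ≤ k := hi
  have hj : j ≤ n - k := hj
  have hA := hx.nonneg
  have hlen : (i : ℝ) ≤ A * (2 * (D + c + 2 * δ)) + A :=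
    calc (i : ℝ) ≤ |((k - i : ℕ) : ℝ) - ((k + j : ℕ) : ℝ)| := by
          rw [abs_sub_comm]
          refine le_trans ?_ (le_abs_self _)
          push_cast [hi]
          linarith [j.cast_nonneg (α := ℝ)]
      _ ≤ A * dist (x (k - i)) (x (k + j)) + A := (hx _ (by lia) _ (by lia)).2
      _ ≤ A * (2 * (D + c + 2 * δ)) + A := by gcongr
  calc gromovProduct (x 0) (x n) (x k) ≤ dist (x (k - i)) (x k) + D + c := hle
    _ ≤ (A * i + A) + D + c := by
      gcongr
      simpa [hi] using (hx (k - i) (by lia) k hk).1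
    _ ≤ _ := by gcongr

end Morse

section LeftInvariant

variable {G : Type*} [Group G] [PseudoMetricSpace G] [IsIsometricSMul G G] {c δ : ℝ}

theorem gromovProduct_mul_left (g x y o : G) :
    gromovProduct (g * x) (g * y) (g * o) = gromovProduct x y o := by
  simp only [gromovProduct, dist_mul_left]

theorem finite_setOf_mem_exists_dist_le {H₁ H₂ : Subgroup G}
    (hball : ∀ r : ℝ, (Metric.closedBall (1 : G) r).Finite)
    (hfin : ((H₁ ⊓ H₂ : Subgroup G) : Set G).Finite) (r : ℝ) :
    {s ∈ (H₁ : Set G) | ∃ u ∈ H₂, dist s u ≤ r}.Finite := by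
  have hfib (b : G) : {s ∈ (H₁ : Set G) | s * b ∈ H₂}.Finite := by
    rcases Set.eq_empty_or_nonempty {s ∈ (H₁ : Set G) | s * b ∈ H₂} with h | ⟨s₀, hs₀, hs₀b⟩
    · exact h ▸ Set.finite_empty
    · refine (hfin.image (· * s₀)).subset fun s ⟨hs, hsb⟩ => ⟨s * s₀⁻¹, ⟨?_, ?_⟩, by simp⟩
      · exact H₁.mul_mem hs (H₁.inv_mem hs₀)
      · simpa [mul_assoc] using H₂.mul_mem hsb (H₂.inv_mem hs₀b)
  refine ((hball r).biUnion fun b _ => hfib b).subset ?_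
  rintro s ⟨hs, u, hu, hsu⟩
  refine Set.mem_biUnion (x := s⁻¹ * u) ?_ ⟨hs, by simpa⟩
  rw [Metric.mem_closedBall, dist_comm, ← dist_mul_left s]
  simpa

theorem IsGromovHyperbolic.exists_gromovProduct_le_of_finite_inf (hG : IsGromovHyperbolic G δ)
    (hc : IsCoarselyMengerConvex G c) (hball : ∀ r : ℝ, (Metric.closedBall (1 : G) r).Finite)
    {H₁ H₂ : Subgroup G} {K : ℝ} (h₁ : ∀ a ∈ H₁, FollowsGeodesics K 1 a H₁)
    (h₂ : ∀ b ∈ H₂, FollowsGeodesics K 1 b H₂)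
    (hfin : ((H₁ ⊓ H₂ : Subgroup G) : Set G).Finite) :
    ∃ R : ℝ, ∀ a ∈ H₁, ∀ b ∈ H₂, gromovProduct a b 1 ≤ R := by
  obtain ⟨R, hR⟩ := ((finite_setOf_mem_exists_dist_le hball hfin
    (2 * (K + c + 2 * δ))).image fun s => dist s 1).bddAbove
  refine ⟨R + K + c, fun a ha b hb => ?_⟩
  obtain ⟨s, hs, u, hu, hsu, hle⟩ :=
    hG.exists_dist_le_of_followsGeodesics hc (h₁ a ha) (h₂ b hb)
  have : dist s 1 ≤ R := hR ⟨s, ⟨hs, u, hu, hsu⟩, rfl⟩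
  linarith

/-- The set `F` is coarsely a segment with coordinate `f`, which in the application is the distance
to an end of a geodesic. -/
theorem exists_card_le_mul_of_dist_le (hball : ∀ r : ℝ, (Metric.closedBall (1 : G) r).Finite)
    (K : ℝ) :
    ∃ B : ℕ, ∀ (F : Finset G) (f : G → ℝ) (t R : ℝ), 0 ≤ R → (∀ s ∈ F, |f s - t| ≤ R) →
      (∀ s ∈ F, ∀ u ∈ F, dist s u ≤ |f s - f u| + K) → (F.card : ℝ) ≤ B * (2 * R + 2) := by
  classical
  refine ⟨(Metric.closedBall (1 : G) (1 + K)).ncard, fun F f t R hR₀ hR hK => ?_⟩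
  have hfib (b : ℤ) : (F.filter fun s => ⌊f s⌋ = b).card ≤
      (Metric.closedBall (1 : G) (1 + K)).ncard := by
    rcases (F.filter fun s => ⌊f s⌋ = b).eq_empty_or_nonempty with h | ⟨s, hs⟩
    · simp [h]
    rw [Finset.mem_filter] at hs
    rw [← Set.ncard_coe_finset]
    refine Set.ncard_le_ncard_of_injOn (s⁻¹ * ·) (fun u hu => ?_) (mul_right_injective s⁻¹).injOn
      (hball _)
    rw [Finset.mem_coe, Finset.mem_filter] at hu
    have hsu := Int.abs_sub_lt_one_of_floor_eq_floor (hs.2.trans hu.2.symm)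
    rw [Metric.mem_closedBall, dist_comm, ← dist_mul_left s]
    simpa using (hK s hs.1 u hu.1).trans (by linarith)
  have hmaps (s : G) (hs : s ∈ F) : ⌊f s⌋ ∈ Finset.Icc ⌊t - R⌋ ⌊t + R⌋ := by
    obtain ⟨h₁, h₂⟩ := abs_le.1 (hR s hs)
    exact Finset.mem_Icc.2 ⟨Int.floor_le_floor (by linarith), Int.floor_le_floor (by linarith)⟩
  have hcard := Finset.card_le_mul_card_image_of_maps_to hmaps _ fun b _ => hfib b
  have hIcc : ((Finset.Icc ⌊t - R⌋ ⌊t + R⌋).card : ℝ) ≤ 2 * R + 2 := by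
    rw [Int.card_Icc, ← Int.cast_natCast, Int.toNat_of_nonneg]
    · push_cast
      linarith [Int.floor_le (t + R), Int.lt_floor_add_one (t - R)]
    · have := Int.floor_le_floor (show t - R ≤ t + R by linarith)
      lia
  calc (F.card : ℝ) ≤ (Metric.closedBall (1 : G) (1 + K)).ncard *
        (Finset.Icc ⌊t - R⌋ ⌊t + R⌋).card := by exact_mod_cast hcard
    _ ≤ _ := by gcongr

theorem IsGromovHyperbolic.gromovProduct_mul_le_of_commute (hG : IsGromovHyperbolic G δ) {g h m : G}
    (hcomm : Commute g h) (hm : gromovProduct 1 h m = 0)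
    (hg₁ : dist 1 g + 2 * δ < dist m 1) (hg₂ : dist 1 g + 2 * δ < dist m h) :
    gromovProduct 1 h (g * m) ≤ 2 * δ := by
  have hfar (z y : G) (hy : dist 1 g + 2 * δ < dist m z) (hyz : dist y (g * z) = dist 1 g) :
      2 * δ < gromovProduct (g * z) y (g * m) := by
    have hmz : dist (g * z) (g * m) = dist m z := by rw [dist_mul_left, dist_comm]
    linarith [gromovProduct_add_gromovProduct (g * z) y (g * m),
      gromovProduct_le_dist_right (g * m) y (g * z)]
  have hzero : gromovProduct (g * 1) (g * h) (g * m) = 0 :=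
    (gromovProduct_mul_left g 1 h m).trans hm
  have h₁ := hfar 1 1 hg₁ (by simp)
  have h₂ := hfar h h hg₂ (by simpa [hcomm.eq] using dist_mul_left h 1 g)
  rw [gromovProduct_comm] at h₂
  have hmin := hG.min_min_le (g * 1) 1 h (g * h) (g * m)
  rw [hzero, zero_add, min_le_iff, min_le_iff] at hmin
  rcases hmin with h | h | h <;> linarith

/-- The translates under `g, g², …, gᴸ` of the midpoint of a geodesic from `1` to a high power of
`g` stay near that geodesic, so they are too crowded if these powers of `g` are short. -/
theorem IsGromovHyperbolic.exists_le_mul_of_forall_dist_pow_le (hG : IsGromovHyperbolic G δ)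
    (hc : IsCoarselyMengerConvex G c) (hball : ∀ r : ℝ, (Metric.closedBall (1 : G) r).Finite)
    {g : G} (hg : ¬IsOfFinOrder g) :
    ∃ B : ℝ, ∀ (L : ℕ) (R : ℝ), (∀ i ≤ L, dist 1 (g ^ i) ≤ R) → L ≤ B * (R + 1) := by
  classical
  obtain ⟨B, hB⟩ := exists_card_le_mul_of_dist_le hball (6 * δ)
  refine ⟨2 * B, fun L R hR => ?_⟩
  have hinj := injective_pow_iff_not_isOfFinOrder.2 hg
  obtain ⟨N, hN⟩ : ∃ N : ℕ, 2 * (R + 2 * δ + c) < dist 1 (g ^ N) := by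
    by_contra! h
    refine Set.infinite_range_of_injective hinj ((hball (2 * (R + 2 * δ + c))).subset ?_)
    rintro _ ⟨N, rfl⟩
    simpa [dist_comm] using h N
  obtain ⟨m, hm, hm₁, hm₂⟩ := hc 1 (g ^ N) (dist 1 (g ^ N) / 2) (by positivity)
    (half_le_self dist_nonneg)
  have hnear (i : ℕ) (hi : i ≤ L) : gromovProduct 1 (g ^ N) (g ^ i * m) ≤ 2 * δ := by
    have := hR i hi
    have := hc.nonneg
    exact hG.gromovProduct_mul_le_of_commute ((Commute.refl g).pow_pow i N)
      (gromovProduct_eq_zero_iff.2 hm) (by rw [dist_comm m]; linarith) (by linarith)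
  have hdist (i : ℕ) (hi : i ≤ L) : |dist (g ^ i * m) 1 - dist m 1| ≤ R := by
    have h : dist (g ^ i * m) (g ^ i) = dist m 1 := by simpa using dist_mul_left (g ^ i) m 1
    have := abs_dist_sub_le 1 (g ^ i) (g ^ i * m)
    rw [dist_comm (g ^ i), h, dist_comm 1 (g ^ i * m)] at this
    exact this.trans (hR i hi)
  have hcard := hB ((Finset.range (L + 1)).image fun i => g ^ i * m) (dist · 1) (dist m 1) R
    (dist_nonneg.trans (hR 0 L.zero_le)) (by simpa [Nat.lt_succ_iff] using hdist) <| by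
      simp only [Finset.forall_mem_image, Finset.mem_range, Nat.lt_succ_iff]
      intro i hi j hj
      linarith [hG.dist_le_of_gromovProduct_le (hnear i hi) (hnear j hj)]
  rw [Finset.card_image_of_injective _ fun i j h => hinj (mul_right_cancel h),
    Finset.card_range] at hcard
  push_cast at hcard
  linarith

theorem IsGromovHyperbolic.exists_le_mul_dist_pow (hG : IsGromovHyperbolic G δ)
    (hc : IsCoarselyMengerConvex G c) (hball : ∀ r : ℝ, (Metric.closedBall (1 : G) r).Finite)
    {g : G} (hg : ¬IsOfFinOrder g) :
    ∃ B : ℝ, ∀ n : ℕ, (n : ℝ) ≤ B * dist 1 (g ^ n) := by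
  obtain ⟨B, hB⟩ := hG.exists_le_mul_of_forall_dist_pow_le hc hball hg
  refine ⟨B, fun n => ?_⟩
  rcases n.eq_zero_or_pos with rfl | hn
  · simp
  have hsub : Subadditive fun i => dist 1 (g ^ i) := fun i j => by
    have := dist_triangle 1 (g ^ i) (g ^ (i + j))
    have h : dist (g ^ i) (g ^ (i + j)) = dist 1 (g ^ j) := by
      simpa [pow_add] using dist_mul_left (g ^ i) 1 (g ^ j)
    rwa [h] at this
  obtain ⟨C, hC⟩ := ((Set.finite_Iio n).image fun i => dist 1 (g ^ i)).bddAbove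
  have hpow (q i : ℕ) (hi : i ≤ q * n) : dist 1 (g ^ i) ≤ q * dist 1 (g ^ n) + C := by
    calc dist 1 (g ^ i) = dist 1 (g ^ (i / n * n + i % n)) := by rw [Nat.div_add_mod']
      _ ≤ (i / n : ℕ) * dist 1 (g ^ n) + dist 1 (g ^ (i % n)) := hsub.apply_mul_add_le _ _ _
      _ ≤ q * dist 1 (g ^ n) + C := by
        gcongr
        · exact Nat.div_le_of_le_mul (by rwa [mul_comm])
        · exact hC ⟨i % n, Nat.mod_lt i hn, rfl⟩
  by_contra! h
  obtain ⟨q, hq⟩ := exists_nat_gt (B * (C + 1) / (n - B * dist 1 (g ^ n)))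
  rw [div_lt_iff₀ (sub_pos.2 h)] at hq
  have := hB (q * n) _ (hpow q)
  push_cast at this
  linarith

end LeftInvariant

section WordLength

variable {G : Type u} {X : Set G}

theorem IsWordOver.of_append_left {l₁ l₂ : List G} (h : IsWordOver X (l₁ ++ l₂)) :
    IsWordOver X l₁ := fun x hx => h x (List.mem_append_left _ hx)

theorem IsWordOver.of_append_right {l₁ l₂ : List G} (h : IsWordOver X (l₁ ++ l₂)) :
    IsWordOver X l₂ := fun x hx => h x (List.mem_append_right _ hx)

theorem IsWordOver.append {l₁ l₂ : List G} (h₁ : IsWordOver X l₁) (h₂ : IsWordOver X l₂) :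
    IsWordOver X (l₁ ++ l₂) := fun x hx => (List.mem_append.1 hx).elim (h₁ x) (h₂ x)

variable [Group G]

theorem wordLength_prod_le {l : List G} (hl : IsWordOver X l) : wordLength X l.prod ≤ l.length :=
  Nat.sInf_le ⟨l, rfl, hl, rfl⟩

theorem wordLength_one : wordLength X (1 : G) = 0 :=
  Nat.le_zero.1 <| wordLength_prod_le (l := []) fun _ hx => absurd hx List.not_mem_nil

namespace IsSymmGen

theorem exists_isGeodesicWord (hX : IsSymmGen X) (g : G) :
    ∃ l : List G, IsGeodesicWord X l ∧ l.prod = g := by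
  have hg : g ∈ Subgroup.closure X := hX.2.2 ▸ Subgroup.mem_top g
  rw [← Subgroup.mem_toSubmonoid, Subgroup.closure_toSubmonoid,
    Set.union_eq_left.2 fun x hx => inv_inv x ▸ hX.2.1 _ hx] at hg
  obtain ⟨l, hl, hp⟩ := Submonoid.exists_list_of_mem_closure hg
  obtain ⟨l', hlen, hl', hp'⟩ := Nat.sInf_mem
    (⟨l.length, l, rfl, hl, hp⟩ : {n | ∃ l : List G, l.length = n ∧ IsWordOver X l ∧
      l.prod = g}.Nonempty)
  exact ⟨l', ⟨hl', hp'.symm ▸ hlen⟩, hp'⟩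

theorem wordLength_mul_le (hX : IsSymmGen X) (g h : G) :
    wordLength X (g * h) ≤ wordLength X g + wordLength X h := by
  obtain ⟨l₁, ⟨hl₁, hn₁⟩, rfl⟩ := hX.exists_isGeodesicWord g
  obtain ⟨l₂, ⟨hl₂, hn₂⟩, rfl⟩ := hX.exists_isGeodesicWord h
  simpa only [List.prod_append, List.length_append, hn₁, hn₂] using
    wordLength_prod_le (hl₁.append hl₂)

theorem wordLength_inv (hX : IsSymmGen X) (g : G) : wordLength X g⁻¹ = wordLength X g := by
  have hle (g : G) : wordLength X g⁻¹ ≤ wordLength X g := by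
    obtain ⟨l, ⟨hl, hn⟩, rfl⟩ := hX.exists_isGeodesicWord g
    rw [← hn, List.prod_inv_reverse]
    refine (wordLength_prod_le fun x hx => ?_).trans_eq (by simp)
    obtain ⟨y, hy, rfl⟩ := List.mem_map.1 (List.mem_reverse.1 hx)
    exact hX.2.1 _ (hl y hy)
  exact (hle g).antisymm (by simpa using hle g⁻¹)

theorem wordLength_zpow_le (hX : IsSymmGen X) (g : G) (m : ℤ) :
    wordLength X (g ^ m) ≤ m.natAbs * wordLength X g := by
  have hpow (n : ℕ) : wordLength X (g ^ n) ≤ n * wordLength X g := by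
    induction n with
    | zero => simp [wordLength_one]
    | succ n ih =>
      rw [pow_succ, Nat.succ_mul]
      exact (hX.wordLength_mul_le _ _).trans (by gcongr)
  obtain ⟨n, rfl | rfl⟩ := m.eq_nat_or_neg
  · simpa using hpow n
  · simpa [hX.wordLength_inv] using hpow n

theorem wordDist_triangle (hX : IsSymmGen X) (x y z : G) :
    wordDist X x z ≤ wordDist X x y + wordDist X y z := by
  simpa [wordDist, mul_assoc] using hX.wordLength_mul_le (x⁻¹ * y) (y⁻¹ * z)

theorem finite_setOf_wordLength_le (hX : IsSymmGen X) (n : ℕ) :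
    {g : G | wordLength X g ≤ n}.Finite := by
  have : Finite X := hX.1
  refine ((List.finite_length_le X n).image fun l => (l.map Subtype.val).prod).subset fun g hg => ?_
  obtain ⟨l, ⟨hl, hn⟩, rfl⟩ := hX.exists_isGeodesicWord g
  exact ⟨l.attachWith (· ∈ X) hl, (List.length_attachWith.trans hn).trans_le hg,
    congrArg List.prod (List.attachWith_map_subtype_val hl)⟩

theorem exists_wordLength_map_le {H : Type*} [Group H] {Z : Set H} (hZ : IsSymmGen Z)
    (hX : IsSymmGen X) (f : H →* G) :
    ∃ A : ℕ, ∀ h, wordLength X (f h) ≤ A * wordLength Z h := by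
  obtain ⟨A, hA⟩ := (hZ.1.image fun z => wordLength X (f z)).bddAbove
  have hle (l : List H) (hl : IsWordOver Z l) : wordLength X (f l.prod) ≤ A * l.length := by
    induction l with
    | nil => simp [wordLength_one]
    | cons a l ih =>
      rw [List.prod_cons, map_mul, List.length_cons, Nat.mul_succ, add_comm]
      exact (hX.wordLength_mul_le _ _).trans
        (add_le_add (hA ⟨a, hl a List.mem_cons_self, rfl⟩)
          (ih fun x hx => hl x (List.mem_cons_of_mem _ hx)))
  refine ⟨A, fun h => ?_⟩
  obtain ⟨l, ⟨hl, hn⟩, rfl⟩ := hZ.exists_isGeodesicWord h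
  exact hn ▸ hle l hl

end IsSymmGen

theorem exists_isSymmGen (G : Type*) [Group G] [hG : Group.FG G] : ∃ X : Set G, IsSymmGen X := by
  obtain ⟨S, hS, hfin⟩ := Group.fg_iff.1 hG
  refine ⟨S ∪ S⁻¹, hfin.union hfin.inv, fun x hx => ?_, ?_⟩
  · simpa [or_comm] using hx
  · rw [Subgroup.closure_union, Subgroup.closure_inv, sup_idem, hS]

namespace IsGeodesicWord

theorem of_isInfix (hX : IsSymmGen X) {l v : List G} (h : IsGeodesicWord X l) (hv : v <:+: l) :
    IsGeodesicWord X v := by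
  obtain ⟨s, t, rfl⟩ := hv
  have hst := h.1.of_append_left
  have hvX := hst.of_append_right
  refine ⟨hvX, le_antisymm ?_ (wordLength_prod_le hvX)⟩
  have hs := wordLength_prod_le hst.of_append_left
  have ht := wordLength_prod_le h.1.of_append_right
  have hmul := hX.wordLength_mul_le (s.prod * v.prod) t.prod
  have hmul' := hX.wordLength_mul_le s.prod v.prod
  have hlen := h.2
  simp only [List.prod_append, List.length_append] at hlen
  lia

theorem wordDist_take (hX : IsSymmGen X) {l : List G} (h : IsGeodesicWord X l) {i j : ℕ}
    (hij : i ≤ j) (hj : j ≤ l.length) : wordDist X (l.take i).prod (l.take j).prod = j - i := by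
  have hsplit : l.take j = l.take i ++ (l.take j).drop i := by
    conv_lhs => rw [← List.take_append_drop i (l.take j), List.take_take, min_eq_left hij]
  have hg : IsGeodesicWord X ((l.take j).drop i) :=
    h.of_isInfix hX ((List.drop_suffix _ _).isInfix.trans (List.take_prefix _ _).isInfix)
  rw [hsplit, List.prod_append, wordDist, inv_mul_cancel_left, ← hg.2]
  simp [hj]

end IsGeodesicWord
end WordLength

section WordMetric

variable {G : Type u} [Group G]

/-- The ambient distance is the word distance of the symmetric generating set `X`. This is a
predicate, rather than a type synonym of `G` carrying the metric, so that several generating sets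
of the same group can be used side by side. -/
structure IsWordMetric (X : Set G) [PseudoMetricSpace G] : Prop where
  isSymmGen : IsSymmGen X
  dist_eq : ∀ x y : G, dist x y = wordDist X x y

theorem IsSymmGen.exists_isWordMetric {X : Set G} (hX : IsSymmGen X) :
    ∃ _ : PseudoMetricSpace G, IsWordMetric X :=
  let _ : PseudoMetricSpace G :=
    { dist := fun x y => wordDist X x y
      dist_self := fun x => by simp [wordDist, wordLength_one]
      dist_comm := fun x y => by simp [wordDist, ← hX.wordLength_inv (x⁻¹ * y)]
      dist_triangle := fun x y z => mod_cast hX.wordDist_triangle x y z }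
  ⟨inferInstance, hX, fun _ _ => rfl⟩

theorem IsWordHyperbolic.exists_isWordMetric (hG : IsWordHyperbolic G) :
    ∃ (_ : PseudoMetricSpace G) (X : Set G), IsWordMetric X ∧ ∃ δ, IsGromovHyperbolic G δ := by
  obtain ⟨X, hX, δ, -, hδ⟩ := hG
  obtain ⟨inst, hdist⟩ := hX.exists_isWordMetric
  refine ⟨inst, X, hdist, δ, fun x y z o => ?_⟩
  simpa only [gromovProduct, gromovProd, hdist.dist_eq, ge_iff_le, sub_le_iff_le_add] using
    hδ x y z o

namespace IsWordMetric

variable [PseudoMetricSpace G] {X : Set G}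

theorem isIsometricSMul (hX : IsWordMetric X) : IsIsometricSMul G G :=
  ⟨fun g => Isometry.of_dist_eq fun x y => by simp [hX.dist_eq, wordDist, mul_assoc]⟩

theorem dist_one (hX : IsWordMetric X) (g : G) : dist 1 g = wordLength X g := by
  simp [hX.dist_eq, wordDist]

theorem finite_closedBall (hX : IsWordMetric X) (r : ℝ) : (Metric.closedBall (1 : G) r).Finite := by
  refine (hX.isSymmGen.finite_setOf_wordLength_le ⌊r⌋₊).subset fun g hg => ?_
  rw [Metric.mem_closedBall, dist_comm, hX.dist_one] at hg
  exact Nat.le_floor hg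

theorem dist_take (hX : IsWordMetric X) {l : List G} (hl : IsGeodesicWord X l) {i j : ℕ}
    (hij : i ≤ j) (hj : j ≤ l.length) :
    dist (l.take i).prod (l.take j).prod = j - i := by
  rw [hX.dist_eq, hl.wordDist_take hX.isSymmGen hij hj, Nat.cast_sub hij]

theorem isCoarselyMengerConvex (hX : IsWordMetric X) : IsCoarselyMengerConvex G 1 := by
  intro x y t ht₀ ht
  have := hX.isIsometricSMul
  obtain ⟨l, hl, hprod⟩ := hX.isSymmGen.exists_isGeodesicWord (x⁻¹ * y)
  have hlen : dist x y = l.length := by rw [hX.dist_eq, wordDist, ← hprod, hl.2]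
  have hle : ⌊t⌋₊ ≤ l.length := Nat.floor_le_of_le (ht.trans_eq hlen)
  have hx : dist x (x * (l.take ⌊t⌋₊).prod) = ⌊t⌋₊ := by
    simpa using (dist_mul_left x 1 _).trans (hX.dist_take hl (Nat.zero_le _) hle)
  have hy : dist (x * (l.take ⌊t⌋₊).prod) y = l.length - ⌊t⌋₊ := by
    simpa [hprod] using (dist_mul_left x _ l.prod).trans (by simpa using hX.dist_take hl hle le_rfl)
  refine ⟨x * (l.take ⌊t⌋₊).prod, by linarith, ?_, ?_⟩
  · exact hx.trans_le (Nat.floor_le ht₀)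
  · exact hx ▸ (Nat.lt_floor_add_one t).le

theorem exists_isQuasigeodesicPath (hX : IsWordMetric X) {H : Type*} [Group H] {Z : Set H}
    (hZ : IsSymmGen Z) (f : H →* G) {c : ℝ}
    (hf : ∀ h, (wordLength Z h : ℝ) ≤ c * wordLength X (f h) + c) :
    ∃ A, ∀ l, IsGeodesicWord Z l →
      IsQuasigeodesicPath A (fun i => f (l.take i).prod) l.length := by
  obtain ⟨B, hB⟩ := hZ.exists_wordLength_map_le hX.isSymmGen f
  refine ⟨max B c, fun l hl i hi j hj => ?_⟩
  wlog hij : i ≤ j generalizing i j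
  · simpa only [dist_comm, abs_sub_comm] using this j hj i hi (le_of_not_ge hij)
  have hlen := hl.wordDist_take hZ hij hj
  rw [wordDist] at hlen
  have hub := hB ((l.take i).prod⁻¹ * (l.take j).prod)
  have hlb := hf ((l.take i).prod⁻¹ * (l.take j).prod)
  rw [hlen] at hub hlb
  have hij' : |(i : ℝ) - j| = (j - i : ℕ) := by
    rw [abs_sub_comm, ← Nat.cast_sub hij, Nat.abs_cast]
  have hdist : dist (f (l.take i).prod) (f (l.take j).prod) =
      wordLength X (f ((l.take i).prod⁻¹ * (l.take j).prod)) := by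
    rw [hX.dist_eq, wordDist, map_mul, map_inv]
  dsimp only
  rw [hij', hdist]
  constructor
  · calc _ ≤ (B : ℝ) * (j - i : ℕ) := mod_cast hub
      _ ≤ max (B : ℝ) c * (j - i : ℕ) + max (B : ℝ) c := by
        have : (0 : ℝ) ≤ max (B : ℝ) c := le_max_of_le_left B.cast_nonneg
        refine le_add_of_le_of_nonneg ?_ this
        gcongr
        exact le_max_left _ _
  · refine hlb.trans ?_
    gcongr <;> exact le_max_right _ _

variable {δ : ℝ}

theorem exists_gromovProduct_take_le (hX : IsWordMetric X) (hδ : IsGromovHyperbolic G δ)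
    {Y : Set G} (hY : IsSymmGen Y) :
    ∃ K, ∀ l, IsGeodesicWord Y l → ∀ k ≤ l.length,
      gromovProduct 1 l.prod (l.take k).prod ≤ K := by
  obtain ⟨B, hB⟩ := hX.isSymmGen.exists_wordLength_map_le hY (MonoidHom.id G)
  obtain ⟨A, hA⟩ := hX.exists_isQuasigeodesicPath hY (MonoidHom.id G) (c := B) fun h =>
    (Nat.cast_le.2 (hB h)).trans (by push_cast; exact le_add_of_nonneg_right B.cast_nonneg)
  obtain ⟨K, hK⟩ := hδ.exists_gromovProduct_le_of_isQuasigeodesicPath hX.isCoarselyMengerConvex A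
  exact ⟨K, fun l hl k hk => by simpa using hK _ _ (hA l hl) k hk⟩

theorem exists_followsGeodesics (hX : IsWordMetric X) (hδ : IsGromovHyperbolic G δ)
    {C : Subgroup G} (hC : IsQuasiconvex C) :
    ∃ K, ∀ a ∈ C, FollowsGeodesics K 1 a (C : Set G) := by
  obtain ⟨Z, hZ, Y, hY, c, hc₀, hc⟩ := hC
  obtain ⟨B, hB⟩ := hX.isSymmGen.exists_wordLength_map_le hY (MonoidHom.id G)
  obtain ⟨A, hA⟩ := hX.exists_isQuasigeodesicPath hZ C.subtype (c := max (c * B) c) fun h => by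
    have hle : (wordLength Y (h : G) : ℝ) ≤ B * wordLength X (h : G) := mod_cast hB (h : G)
    calc (wordLength Z h : ℝ) ≤ c * (B * wordLength X (h : G)) + c := (hc h).trans (by gcongr)
      _ ≤ _ := by
        rw [← mul_assoc]
        exact add_le_add (mul_le_mul_of_nonneg_right (le_max_left _ _) (Nat.cast_nonneg _))
          (le_max_right _ _)
  obtain ⟨K, hK⟩ := hδ.exists_followsGeodesics hX.isCoarselyMengerConvex A
  refine ⟨K, fun a ha w hw => ?_⟩
  obtain ⟨l, hl, hprod⟩ := hZ.exists_isGeodesicWord ⟨a, ha⟩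
  obtain ⟨_, ⟨i, -, rfl⟩, hi⟩ := hK _ _ (hA l hl) w (by simpa [hprod] using hw)
  exact ⟨_, ((l.take i).prod).2, hi⟩

end IsWordMetric
end WordMetric

section VirtuallyCyclic

theorem IsVirtuallyCyclic.exists_eq_mul_zpow {C : Type u} [Group C] (hC : IsVirtuallyCyclic C) :
    ∃ (g : C) (S : Set C), S.Finite ∧ ∀ a, ∃ s ∈ S, ∃ m : ℤ, a = s * g ^ m := by
  obtain ⟨Z, ⟨⟨⟨g, hgZ⟩, hg⟩⟩, hZ⟩ := hC
  have : Finite (C ⧸ Z) := Subgroup.finite_quotient_of_finiteIndex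
  refine ⟨g, Set.range (Quotient.out : C ⧸ Z → C), Set.finite_range _, fun a => ?_⟩
  obtain ⟨h, hh⟩ := QuotientGroup.mk_out_eq_mul Z a
  obtain ⟨m, hm⟩ := hg h⁻¹
  refine ⟨_, ⟨(a : C ⧸ Z), rfl⟩, m, ?_⟩
  have hm' : g ^ m = (h : C)⁻¹ := congrArg Subtype.val hm
  rw [hm', eq_mul_inv_iff_mul_eq, hh]

theorem IsVirtuallyCyclic.fg {C : Type u} [Group C] (hC : IsVirtuallyCyclic C) : Group.FG C := by
  obtain ⟨g, S, hS, hgS⟩ := hC.exists_eq_mul_zpow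
  refine Group.fg_iff.2 ⟨insert g S, (Subgroup.eq_top_iff' _).2 fun a => ?_, hS.insert g⟩
  obtain ⟨s, hs, m, rfl⟩ := hgS a
  exact mul_mem (Subgroup.subset_closure (Set.mem_insert_of_mem g hs))
    (zpow_mem (Subgroup.subset_closure (Set.mem_insert g S)) m)

theorem IsWordMetric.exists_wordLength_zpow_le {G : Type u} [Group G] [PseudoMetricSpace G]
    {X : Set G} {δ : ℝ} (hX : IsWordMetric X) (hδ : IsGromovHyperbolic G δ) {H : Type*} [Group H]
    {Z : Set H} (hZ : IsSymmGen Z) (f : H →* G) (hf : Function.Injective f) (g : H) :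
    ∃ B : ℝ, ∀ m : ℤ, (wordLength Z (g ^ m) : ℝ) ≤ B * wordLength X (f (g ^ m)) + B := by
  have := hX.isIsometricSMul
  by_cases hg : IsOfFinOrder g
  · obtain ⟨B, hB⟩ := (hg.finite_zpowers.image (wordLength Z)).bddAbove
    refine ⟨B, fun m => ?_⟩
    have : wordLength Z (g ^ m) ≤ B := hB ⟨_, ⟨m, rfl⟩, rfl⟩
    calc (wordLength Z (g ^ m) : ℝ) ≤ B := mod_cast this
      _ ≤ _ := le_add_of_nonneg_left (by positivity)
  · obtain ⟨B, hB⟩ := hδ.exists_le_mul_dist_pow hX.isCoarselyMengerConvex hX.finite_closedBall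
      (mt hf.isOfFinOrder_iff.1 hg)
    refine ⟨max 0 B * wordLength Z g, fun m => ?_⟩
    have hm : (m.natAbs : ℝ) ≤ B * wordLength X (f (g ^ m)) := by
      obtain ⟨n, rfl | rfl⟩ := m.eq_nat_or_neg <;>
        simpa [hX.dist_one, hX.isSymmGen.wordLength_inv] using hB n
    calc (wordLength Z (g ^ m) : ℝ) ≤ m.natAbs * wordLength Z g :=
          mod_cast hZ.wordLength_zpow_le g m
      _ ≤ max 0 B * wordLength X (f (g ^ m)) * wordLength Z g := by
        gcongr
        exact hm.trans (by gcongr; exact le_max_right _ _)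
      _ ≤ _ := by
        rw [mul_right_comm]
        exact le_add_of_nonneg_right (by positivity)

theorem IsVirtuallyCyclic.isQuasiconvex {G : Type u} [Group G] (hG : IsWordHyperbolic G)
    {C : Subgroup G} (hC : IsVirtuallyCyclic ↥C) : IsQuasiconvex C := by
  obtain ⟨_, Y, hY, δ, hδ⟩ := hG.exists_isWordMetric
  have := hC.fg
  obtain ⟨W, hW⟩ := exists_isSymmGen ↥C
  obtain ⟨g, S, hS, hgS⟩ := hC.exists_eq_mul_zpow
  obtain ⟨B, hB⟩ := hY.exists_wordLength_zpow_le hδ hW C.subtype C.subtype_injective g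
  obtain ⟨D, hD⟩ := (hS.image (wordLength W)).bddAbove
  obtain ⟨E, hE⟩ := (hS.image fun s : ↥C => wordLength Y (s : G)).bddAbove
  have hB₀ : 0 ≤ B := by simpa [wordLength_one] using hB 0
  refine ⟨W, hW, Y, hY.isSymmGen, B + D + B * E + 1, by positivity, fun a => ?_⟩
  obtain ⟨s, hs, m, ha⟩ := hgS a
  have hWs : wordLength W s ≤ D := hD ⟨s, hs, rfl⟩
  have hYs : wordLength Y (s : G) ≤ E := hE ⟨s, hs, rfl⟩
  have hWa : wordLength W a ≤ wordLength W s + wordLength W (g ^ m) :=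
    ha ▸ hW.wordLength_mul_le s (g ^ m)
  have hYg : wordLength Y ((g ^ m : ↥C) : G) ≤ wordLength Y (s : G) + wordLength Y (a : G) := by
    have h := hY.isSymmGen.wordLength_mul_le (s⁻¹ : G) a
    rwa [hY.isSymmGen.wordLength_inv, ← Subgroup.coe_inv, ← Subgroup.coe_mul,
      inv_mul_eq_of_eq_mul ha] at h
  calc (wordLength W a : ℝ) ≤ wordLength W s + wordLength W (g ^ m) := mod_cast hWa
    _ ≤ D + (B * (E + wordLength Y (a : G)) + B) := by
      refine add_le_add (mod_cast hWs) ((hB m).trans ?_)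
      gcongr
      exact_mod_cast hYg.trans (Nat.add_le_add_right hYs _)
    _ = B * wordLength Y (a : G) + (B + D + B * E) := by ring
    _ ≤ _ := by
      refine add_le_add ?_ (le_add_of_nonneg_right zero_le_one)
      gcongr
      linarith [mul_nonneg hB₀ E.cast_nonneg, D.cast_nonneg (α := ℝ)]

end VirtuallyCyclic

section Concatenation

variable {G : Type u} [Group G] [PseudoMetricSpace G] {X Y : Set G} {δ : ℝ} {C₁ C₂ : Subgroup G}

theorem IsWordMetric.exists_gromovProduct_le_of_isQuasiconvex (hY : IsWordMetric Y)
    (hδ : IsGromovHyperbolic G δ) (hC₁ : IsQuasiconvex C₁) (hC₂ : IsQuasiconvex C₂)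
    (hfin : ((C₁ ⊓ C₂ : Subgroup G) : Set G).Finite) :
    ∃ R : ℝ, ∀ a ∈ C₁, ∀ b ∈ C₂, gromovProduct a b 1 ≤ R := by
  have := hY.isIsometricSMul
  obtain ⟨K₁, hK₁⟩ := hY.exists_followsGeodesics hδ hC₁
  obtain ⟨K₂, hK₂⟩ := hY.exists_followsGeodesics hδ hC₂
  exact hδ.exists_gromovProduct_le_of_finite_inf hY.isCoarselyMengerConvex hY.finite_closedBall
    (fun a ha => (hK₁ a ha).mono (le_max_left K₁ K₂))
    (fun b hb => (hK₂ b hb).mono (le_max_right K₁ K₂)) hfin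

/-- Seen from the point `1` where `s` and `p` meet, `s⁻¹` lies near a geodesic to an element of
`C₁` and `p` near one to an element of `C₂`, so there is little cancellation in `s * p`. -/
theorem IsWordMetric.exists_wordLength_add_le_of_suffix_of_prefix (hY : IsWordMetric Y)
    (hδ : IsGromovHyperbolic G δ) (hX : IsSymmGen X)
    (hC₁ : IsQuasiconvex C₁) (hC₂ : IsQuasiconvex C₂)
    (hfin : ((C₁ ⊓ C₂ : Subgroup G) : Set G).Finite) :
    ∃ T : ℝ, ∀ V₁ V₂, IsGeodesicWord X V₁ → V₁.prod ∈ C₁ → IsGeodesicWord X V₂ → V₂.prod ∈ C₂ →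
      ∀ s p, s <:+ V₁ → p <+: V₂ →
        (wordLength Y s.prod + wordLength Y p.prod : ℝ) ≤ wordLength Y (s.prod * p.prod) + T := by
  have := hY.isIsometricSMul
  obtain ⟨R, hR⟩ := hY.exists_gromovProduct_le_of_isQuasiconvex hδ hC₁ hC₂ hfin
  obtain ⟨K, hK⟩ := hY.exists_gromovProduct_take_le hδ hX
  refine ⟨2 * (R + K + 2 * δ), ?_⟩
  rintro _ _ hV₁ hc₁ hV₂ hc₂ s p ⟨r, rfl⟩ ⟨q, rfl⟩
  have hs : gromovProduct 1 (r ++ s).prod⁻¹ s.prod⁻¹ ≤ K := by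
    have h := hK _ hV₁ r.length (by simp)
    rw [List.take_left, ← gromovProduct_mul_left (r ++ s).prod⁻¹, gromovProduct_comm] at h
    simpa using h
  have hp : gromovProduct 1 (p ++ q).prod p.prod ≤ K := by
    simpa using hK _ hV₂ p.length (by simp)
  have hsp := hδ.gromovProduct_le_of_le hs hp (hR _ (C₁.inv_mem hc₁) _ hc₂)
  have hdist : dist s.prod⁻¹ p.prod = wordLength Y (s.prod * p.prod) := by
    rw [hY.dist_eq, wordDist, inv_inv]
  rw [gromovProduct, dist_comm, dist_comm p.prod, hY.dist_one, hY.dist_one, hdist,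
    hY.isSymmGen.wordLength_inv] at hsp
  linarith

end Concatenation

theorem IsQuasiconvex.exists_length_le_of_suffix_of_prefix {G : Type u} [Group G]
    (hG : IsWordHyperbolic G) {X : Set G} (hX : IsSymmGen X) {C₁ C₂ : Subgroup G}
    (hC₁ : IsQuasiconvex C₁) (hC₂ : IsQuasiconvex C₂)
    (hfin : ((C₁ ⊓ C₂ : Subgroup G) : Set G).Finite) :
    ∃ lam : ℝ, ∀ V₁ V₂, IsGeodesicWord X V₁ → V₁.prod ∈ C₁ → IsGeodesicWord X V₂ → V₂.prod ∈ C₂ →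
      ∀ s p, s <:+ V₁ → p <+: V₂ →
        ((s ++ p).length : ℝ) ≤ lam * wordLength X (s ++ p).prod + lam := by
  obtain ⟨_, Y, hY, δ, hδ⟩ := hG.exists_isWordMetric
  obtain ⟨T, hT⟩ := hY.exists_wordLength_add_le_of_suffix_of_prefix hδ hX hC₁ hC₂ hfin
  obtain ⟨A, hA⟩ := hY.isSymmGen.exists_wordLength_map_le hX (MonoidHom.id G)
  obtain ⟨B, hB⟩ := hX.exists_wordLength_map_le hY.isSymmGen (MonoidHom.id G)
  refine ⟨max (A * B) (A * T), fun V₁ V₂ hV₁ hc₁ hV₂ hc₂ s p hs hp => ?_⟩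
  have hlen : ((s ++ p).length : ℝ) ≤ A * (wordLength Y s.prod + wordLength Y p.prod) := by
    rw [List.length_append, (hV₁.of_isInfix hX hs.isInfix).2, (hV₂.of_isInfix hX hp.isInfix).2]
    exact_mod_cast (add_le_add (hA _) (hA _)).trans_eq (mul_add A _ _).symm
  have hsp : (wordLength Y (s.prod * p.prod) : ℝ) ≤ B * wordLength X (s.prod * p.prod) :=
    mod_cast hB _
  calc ((s ++ p).length : ℝ) ≤ A * (wordLength Y s.prod + wordLength Y p.prod) := hlen
    _ ≤ A * (B * wordLength X (s.prod * p.prod) + T) := by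
      refine mul_le_mul_of_nonneg_left ?_ A.cast_nonneg
      linarith [hT V₁ V₂ hV₁ hc₁ hV₂ hc₂ s p hs hp]
    _ = A * B * wordLength X (s ++ p).prod + A * T := by
      rw [List.prod_append]
      ring
    _ ≤ _ := by
      gcongr
      exacts [le_max_left _ _, le_max_right _ _]

theorem two_cyclic_geodesics_quasigeodesic_general {G : Type u} [Group G]
    (hG : IsWordHyperbolic G) (X : Set G) (hX : IsSymmGen X) (C₁ C₂ : Subgroup G)
    (hC₁ : IsQuasiconvex C₁) (hC₂ : IsQuasiconvex C₂)
    (hfin : ((C₁ ⊓ C₂ : Subgroup G) : Set G).Finite) :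
    ∃ lam₂ : ℝ, 0 < lam₂ ∧
      ∀ c₁ ∈ C₁, ∀ c₂ ∈ C₂, ∀ V₁ V₂ : List G,
        IsGeodesicWord X V₁ → V₁.prod = c₁ →
        IsGeodesicWord X V₂ → V₂.prod = c₂ →
        IsQuasigeodesicWord X lam₂ (V₁ ++ V₂) := by
  obtain ⟨lam, hlam⟩ := hC₁.exists_length_le_of_suffix_of_prefix hG hX hC₂ hfin
  have hgeod {v : List G} (hv : IsGeodesicWord X v) :
      (v.length : ℝ) ≤ max lam 1 * wordLength X v.prod + max lam 1 := by
    rw [← hv.2]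
    exact (le_mul_of_one_le_left (Nat.cast_nonneg _) (le_max_right _ _)).trans
      (le_add_of_nonneg_right (by positivity))
  refine ⟨max lam 1, by positivity, ?_⟩
  rintro _ hc₁ _ hc₂ V₁ V₂ hV₁ rfl hV₂ rfl
  refine ⟨hV₁.1.append hV₂.1, fun v hv => ?_⟩
  obtain hv | hv | ⟨s, p, rfl, hs, hp⟩ := List.infix_append_iff.1 hv
  · exact hgeod (hV₁.of_isInfix hX hv)
  · exact hgeod (hV₂.of_isInfix hX hv)
  · refine (hlam V₁ V₂ hV₁ hc₁ hV₂ hc₂ s p hs hp).trans ?_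
    gcongr <;> exact le_max_left _ _

/-- **Lemma 2.2(7).** Concatenation of geodesics representing elements of two virtually
cyclic subgroups with finite intersection is quasigeodesic. -/
theorem two_cyclic_geodesics_quasigeodesic {G : Type u} [Group G]
    (hG : IsWordHyperbolic G) (X : Set G) (hX : IsSymmGen X)
    (C₁ C₂ : Subgroup G)
    (hvc₁ : IsVirtuallyCyclic ↥C₁) (hvc₂ : IsVirtuallyCyclic ↥C₂)
    (hfin : ((C₁ ⊓ C₂ : Subgroup G) : Set G).Finite) :
    ∃ lam₂ : ℝ, 0 < lam₂ ∧
      ∀ c₁ ∈ C₁, ∀ c₂ ∈ C₂, ∀ V₁ V₂ : List G,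
        IsGeodesicWord X V₁ → V₁.prod = c₁ →
        IsGeodesicWord X V₂ → V₂.prod = c₂ →
        IsQuasigeodesicWord X lam₂ (V₁ ++ V₂) := by
  exact two_cyclic_geodesics_quasigeodesic_general hG X hX C₁ C₂ (hvc₁.isQuasiconvex hG)
    (hvc₂.isQuasiconvex hG) hfin
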